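/- arXiv:2203.03641 — 6 statements merged into one kernel-verified Lean document; each statement's English description precedes it below -/
import Mathlib

section
/- Let A be a mixing finite-dimensional F-algebra, S a finite generating set of A, and (m_1, …, m_d) the characteristic sequence of S. Then m_{j+1} − m_j ≤ 1 for all j = 1, …, d−1; equivalently, for every k ≥ 1 with L_k(S) ≠ A one has dim L_{k+1}(S) > dim L_k(S). -/
/-!
Framework: length of finite-dimensional not necessarily associative,
not necessarily unital algebras (non-unital convention: `L_0(S) = 0`).
The multiplication of the algebra is passed explicitly as a binary
operation `μ`, so that the same definitions apply to an algebra, to its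
commutator algebra, to a Lie bracket, etc.
-/

open Submodule Module

/-- `IsWord μ S k w`: `w` is a product of `k` elements of `S` (with respect to the
multiplication `μ`) with some placement of parentheses. -/
inductive IsWord {A : Type*} (μ : A → A → A) (S : Set A) : ℕ → A → Prop
  | base {a : A} (ha : a ∈ S) : IsWord μ S 1 a
  | mul {m n : ℕ} {a b : A} (ha : IsWord μ S m a) (hb : IsWord μ S n b) :
      IsWord μ S (m + n) (μ a b)

/-- The multiplication of an algebra, as a plain binary operation. -/
def amul (A : Type*) [Mul A] : A → A → A := fun a b => a * b

section
variable (F : Type*) {A : Type*} [Field F] [AddCommGroup A] [Module F A]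

/-- `L_i(S)`: the linear span of all words in `S` of length at most `i`
(non-unital convention, so `L_0(S) = 0`). -/
def Lset (μ : A → A → A) (S : Set A) (i : ℕ) : Submodule F A :=
  Submodule.span F {a | ∃ k, k ≤ i ∧ IsWord μ S k a}

/-- `S` generates the algebra, i.e. the span of all words in `S` is everything. -/
def Generates (μ : A → A → A) (S : Set A) : Prop :=
  Submodule.span F {a | ∃ k, IsWord μ S k a} = ⊤

/-- `l(S)`: the length of a generating set `S`, the least `k` with `L_k(S) = A`. -/
noncomputable def lenSet (μ : A → A → A) (S : Set A) : ℕ :=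
  sInf {k | Lset F μ S k = ⊤}

/-- An irreducible word of length `k` in `S`. -/
def IrredWord (μ : A → A → A) (S : Set A) (k : ℕ) (w : A) : Prop :=
  IsWord μ S k w ∧ ∀ m, m < k → w ∉ Lset F μ S m

end

section
variable {A : Type*}

/-- The set `P(x,y,z)` of monomials. -/
def Pset (μ : A → A → A) (x y z : A) : Set A :=
  {μ (μ x z) y, μ (μ z x) y, μ (μ y z) x, μ (μ z y) x,
   μ x (μ z y), μ x (μ y z), μ y (μ x z), μ y (μ z x),
   μ x y, μ y x, μ x z, μ z x, μ y z, μ z y, x, y, z}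

/-- The set `Q_l(x,y,z)` of monomials. -/
def Qlset (μ : A → A → A) (x y z : A) : Set A :=
  {μ x (μ z y), μ x (μ y z), μ y (μ x z), μ y (μ z x),
   μ x y, μ y x, μ x z, μ z x, μ y z, μ z y, x, y, z}

/-- The set `Q_r(x,y,z)` of monomials. -/
def Qrset (μ : A → A → A) (x y z : A) : Set A :=
  {μ (μ x z) y, μ (μ z x) y, μ (μ y z) x, μ (μ z y) x,
   μ x y, μ y x, μ x z, μ z x, μ y z, μ z y, x, y, z}

end

section
variable (F : Type*) {A : Type*} [Field F] [AddCommGroup A] [Module F A]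

/-- A mixing algebra: `(xy)z` and `z(xy)` lie in the span of `P(x,y,z)`. -/
def IsMixing (μ : A → A → A) : Prop :=
  ∀ x y z : A, μ (μ x y) z ∈ Submodule.span F (Pset μ x y z) ∧
    μ z (μ x y) ∈ Submodule.span F (Pset μ x y z)

/-- A sliding algebra: either `z(xy)` always lies in the span of `Q_r(x,y,z)`, or
`(xy)z` always lies in the span of `Q_l(x,y,z)`. -/
def IsSliding (μ : A → A → A) : Prop :=
  (∀ x y z : A, μ z (μ x y) ∈ Submodule.span F (Qrset μ x y z)) ∨
  (∀ x y z : A, μ (μ x y) z ∈ Submodule.span F (Qlset μ x y z))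

end

/-!
If `L_{k+1}(S) = L_k(S)`, then `V = L_k(S)` contains `S` and is mapped into itself by left and right
multiplication by each element of `S`. In a mixing algebra these two properties pass from `x` and
`y` to `xy`: for `z ∈ V`, the products `z(xy)` and `(xy)z` are combinations of the monomials in
`P(x, y, z)`, each of which lies in `V` because it never multiplies `z` by the unexpanded product
`xy`. Hence `V` contains every word in `S`.
-/

/-- The set `V` is closed under left and right multiplication by `a`, where `a` itself need not
belong to `V`. -/
def IsMulStable {A : Type*} (μ : A → A → A) (V : Set A) (a : A) : Prop :=
  ∀ z ∈ V, μ a z ∈ V ∧ μ z a ∈ V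

theorem Pset_subset_of_isMulStable {A : Type*} {μ : A → A → A} {V : Set A} {x y z : A}
    (hx : x ∈ V) (hy : y ∈ V) (hz : z ∈ V)
    (hxV : IsMulStable μ V x) (hyV : IsMulStable μ V y) : Pset μ x y z ⊆ V := by
  obtain ⟨hxy, hyx⟩ := hxV y hy
  obtain ⟨hxz, hzx⟩ := hxV z hz
  obtain ⟨hyz, hzy⟩ := hyV z hz
  simp only [Pset, Set.insert_subset_iff, Set.singleton_subset_iff]
  exact ⟨(hyV _ hxz).2, (hyV _ hzx).2, (hxV _ hyz).2, (hxV _ hzy).2,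
    (hxV _ hzy).1, (hxV _ hyz).1, (hyV _ hxz).1, (hyV _ hzx).1,
    hxy, hyx, hxz, hzx, hyz, hzy, hx, hy, hz⟩

section
variable {F A : Type*} [Field F] [AddCommGroup A] [Module F A]

theorem IsMixing.isMulStable_mul {μ : A → A → A} (hmix : IsMixing F μ) {V : Submodule F A}
    {x y : A} (hx : x ∈ V) (hy : y ∈ V) (hxV : IsMulStable μ V x) (hyV : IsMulStable μ V y) :
    IsMulStable μ V (μ x y) := fun z hz =>
  have hP : span F (Pset μ x y z) ≤ V :=
    span_le.mpr (Pset_subset_of_isMulStable hx hy hz hxV hyV)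
  ⟨hP (hmix x y z).1, hP (hmix x y z).2⟩

theorem IsMixing.isWord_mem_and_isMulStable {μ : A → A → A} (hmix : IsMixing F μ) {S : Set A}
    {V : Submodule F A} (hS : S ⊆ V) (hSV : ∀ s ∈ S, IsMulStable μ V s) {n : ℕ} {w : A}
    (hw : IsWord μ S n w) : w ∈ V ∧ IsMulStable μ V w := by
  induction hw with
  | base hs => exact ⟨hS hs, hSV _ hs⟩
  | mul _ _ ihx ihy =>
    obtain ⟨hx, hxV⟩ := ihx
    obtain ⟨hy, hyV⟩ := ihy
    exact ⟨(hxV _ hy).1, hmix.isMulStable_mul hx hy hxV hyV⟩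

theorem Lset_mono (μ : A → A → A) (S : Set A) : Monotone (Lset F μ S) :=
  fun _ _ hij => span_mono fun _ ⟨k, hk, hw⟩ => ⟨k, hk.trans hij, hw⟩

theorem subset_Lset_succ (μ : A → A → A) (S : Set A) (k : ℕ) : S ⊆ Lset F μ S (k + 1) :=
  fun _ hs => subset_span ⟨1, Nat.le_add_left 1 k, .base hs⟩

theorem map₂_Lset_le_Lset_add (f : A →ₗ[F] A →ₗ[F] A) (S : Set A) (i j : ℕ) :
    map₂ f (Lset F (f · ·) S i) (Lset F (f · ·) S j) ≤ Lset F (f · ·) S (i + j) := by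
  simp only [Lset, map₂_span_span]
  refine span_mono ?_
  rintro _ ⟨a, ⟨m, hm, ha⟩, b, ⟨n, hn, hb⟩, rfl⟩
  exact ⟨m + n, Nat.add_le_add hm hn, ha.mul hb⟩

theorem isMulStable_of_Lset_succ_le {f : A →ₗ[F] A →ₗ[F] A} {S : Set A} {k : ℕ}
    (h : Lset F (f · ·) S (k + 1) ≤ Lset F (f · ·) S k) {s : A} (hs : s ∈ S) :
    IsMulStable (f · ·) (Lset F (f · ·) S k) s := by
  intro z hz
  have hs₁ : s ∈ Lset F (f · ·) S 1 := subset_Lset_succ _ S 0 hs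
  have hsz : f s z ∈ Lset F (f · ·) S (1 + k) :=
    map₂_Lset_le_Lset_add f S 1 k (apply_mem_map₂ f hs₁ hz)
  have hzs : f z s ∈ Lset F (f · ·) S (k + 1) :=
    map₂_Lset_le_Lset_add f S k 1 (apply_mem_map₂ f hz hs₁)
  exact ⟨h (Nat.add_comm 1 k ▸ hsz), h hzs⟩

theorem mixing_char_seq_steps_le_one_general {f : A →ₗ[F] A →ₗ[F] A} (hmix : IsMixing F (f · ·))
    (S : Set A) {k : ℕ} (hk : Lset F (f · ·) S k ≠ span F {a | ∃ n, IsWord (f · ·) S n a}) :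
    Lset F (f · ·) S k < Lset F (f · ·) S (k + 1) := by
  refine (Lset_mono _ S k.le_succ).lt_of_not_ge fun hle => hk (le_antisymm ?_ ?_)
  · exact span_mono fun _ ⟨n, _, hw⟩ => ⟨n, hw⟩
  · refine span_le.mpr fun w ⟨_, hw⟩ => ?_
    exact (hmix.isWord_mem_and_isMulStable ((subset_Lset_succ _ S k).trans hle)
      (fun _ => isMulStable_of_Lset_succ_le hle) hw).1

end

/-- for a mixing algebra, consecutive terms of the characteristic sequence
of a finite generating set `S` differ by at most `1`; equivalently, for every `k ≥ 1`
with `L_k(S) ≠ A` one has `dim L_{k+1}(S) > dim L_k(S)`. -/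
theorem mixing_char_seq_steps_le_one
    {F B : Type*} [Field F] [NonUnitalNonAssocRing B] [Module F B]
    [SMulCommClass F B B] [IsScalarTower F B B] [FiniteDimensional F B]
    (hmix : IsMixing F (amul B))
    (S : Set B) (hSfin : S.Finite) (hSgen : Generates F (amul B) S) :
    ∀ k : ℕ, 1 ≤ k → Lset F (amul B) S k ≠ ⊤ →
      finrank F (Lset F (amul B) S k) < finrank F (Lset F (amul B) S (k + 1)) := by
  intro k _ hk
  exact finrank_lt_finrank_of_lt
    (mixing_char_seq_steps_le_one_general (f := LinearMap.mul F B) hmix S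
      (hk.trans_eq hSgen.symm))
end

section
/- For every field F and every integer d ≥ 3, the d-dimensional F-algebra B_d with basis x_1, …, x_d and multiplication determined by x_i x_1 = x_{i+1} for i = 1, …, d−1, all other products of basis elements being zero, is a Leibniz algebra and l(B_d) = d. -/
/-!
Framework: length of finite-dimensional not necessarily associative,
not necessarily unital algebras (non-unital convention: `L_0(S) = 0`).
The multiplication of the algebra is passed explicitly as a binary
operation `μ`, so that the same definitions apply to an algebra, to its
commutator algebra, to a Lie bracket, etc.
-/

open Submodule Module

/-!
The multiplication of `B_d` is `x * y = c y • T x`, where `T` shifts the basis and `c` reads off the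
coefficient of `x_1`. As `c` vanishes on the image of `T`, a product with a right factor that is
itself a product is zero, so the only words that survive are the left-normed ones: a word of length
`j + 1` is a scalar multiple of `T ^ j s` for some generator `s`. Since `T ^ d = 0`, words longer
than `d` vanish, which bounds all lengths by `d`. With a single generator each word length
contributes at most one dimension, so the generating set `{x_1}` needs length `d`.
-/

section FunctionalMul

variable {F A : Type*} [Field F] [AddCommGroup A] [Module F A]

/-- The multiplication `x * y = c y • T x`, in which right multiplication by any `y` is a multiple
of one fixed endomorphism `T`, with a factor that depends linearly on `y`. -/
def functionalMul (c : A →ₗ[F] F) (T : Module.End F A) (x y : A) : A :=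
  c y • T x

variable {c : A →ₗ[F] F} {T : Module.End F A}

theorem functionalMul_leibniz (hcT : ∀ x, c (T x) = 0) (x y z : A) :
    functionalMul c T (functionalMul c T x y) z =
      functionalMul c T x (functionalMul c T y z) +
        functionalMul c T (functionalMul c T x z) y := by
  simp only [functionalMul, map_smul, hcT, smul_zero, zero_smul, zero_add]
  exact smul_comm (c z) (c y) (T (T x))

variable {S : Set A}

theorem IsWord.exists_eq_smul_pow_apply (hcT : ∀ x, c (T x) = 0) {k : ℕ} {w : A}
    (hw : IsWord (functionalMul c T) S k w) :
    ∃ j, k = j + 1 ∧ ∃ r : F, ∃ s ∈ S, w = r • (T ^ j) s := by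
  induction hw with
  | base hs => exact ⟨0, rfl, 1, _, hs, by simp⟩
  | mul _ _ ihx ihy =>
    obtain ⟨i, rfl, r, s, hs, rfl⟩ := ihx
    obtain ⟨j, rfl, t, u, -, rfl⟩ := ihy
    refine ⟨i + j + 1, by omega, ?_⟩
    cases j with
    | zero => exact ⟨c (t • u) * r, s, hs, by simp [functionalMul, pow_succ', mul_smul]⟩
    | succ j => exact ⟨0, s, hs, by simp [functionalMul, pow_succ', hcT]⟩

theorem Lset_functionalMul_le (hcT : ∀ x, c (T x) = 0) (k : ℕ) :
    Lset F (functionalMul c T) S k ≤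
      span F (Set.image2 (fun j s => (T ^ j) s) (Set.Iio k) S) := by
  rw [Lset, span_le]
  rintro w ⟨n, hnk, hw⟩
  obtain ⟨j, rfl, r, s, hs, rfl⟩ := hw.exists_eq_smul_pow_apply hcT
  exact smul_mem _ r (subset_span ⟨j, hnk, s, hs, rfl⟩)

theorem finrank_Lset_functionalMul_le (hcT : ∀ x, c (T x) = 0) (hS : S.Finite) (k : ℕ) :
    finrank F (Lset F (functionalMul c T) S k) ≤ k * S.ncard := by
  classical
  lift S to Finset A using hS
  set G := Finset.image₂ (fun j s => (T ^ j) s) (Finset.range k) S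
  have hle : Lset F (functionalMul c T) S k ≤ span F (G : Set A) := by
    simpa [G] using Lset_functionalMul_le (S := (S : Set A)) hcT k
  calc finrank F (Lset F (functionalMul c T) S k)
      ≤ finrank F (span F (G : Set A)) := finrank_mono hle
    _ ≤ G.card := finrank_span_finset_le_card G
    _ ≤ (Finset.range k).card * S.card := Finset.card_image₂_le ..
    _ = k * (S : Set A).ncard := by rw [Finset.card_range, Set.ncard_coe_finset]

theorem Lset_functionalMul_eq_top (hcT : ∀ x, c (T x) = 0) {n : ℕ} (hT : T ^ n = 0)
    (hS : Generates F (functionalMul c T) S) : Lset F (functionalMul c T) S n = ⊤ := by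
  rw [eq_top_iff, ← hS, span_le]
  rintro w ⟨k, hw⟩
  obtain hkn | hnk := le_or_gt k n
  · exact subset_span ⟨k, hkn, hw⟩
  · obtain ⟨j, rfl, r, s, -, rfl⟩ := hw.exists_eq_smul_pow_apply hcT
    simp [pow_eq_zero_of_le (Nat.lt_succ_iff.mp hnk) hT]

theorem lenSet_functionalMul_le (hcT : ∀ x, c (T x) = 0) {n : ℕ} (hT : T ^ n = 0)
    (hS : Generates F (functionalMul c T) S) : lenSet F (functionalMul c T) S ≤ n :=
  Nat.sInf_le (Lset_functionalMul_eq_top hcT hT hS)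

theorem finrank_le_lenSet_functionalMul_mul_ncard (hcT : ∀ x, c (T x) = 0) (hT : IsNilpotent T)
    (hS : Generates F (functionalMul c T) S) (hfin : S.Finite) :
    finrank F A ≤ lenSet F (functionalMul c T) S * S.ncard := by
  obtain ⟨n, hn⟩ := hT
  have htop : Lset F (functionalMul c T) S (lenSet F (functionalMul c T) S) = ⊤ :=
    Nat.sInf_mem (s := {k | Lset F (functionalMul c T) S k = ⊤})
      ⟨n, Lset_functionalMul_eq_top hcT hn hS⟩
  rw [← finrank_top F A, ← htop]
  exact finrank_Lset_functionalMul_le hcT hfin _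

end FunctionalMul

section BasisShift

variable {F A : Type*} [Field F] [AddCommGroup A] [Module F A] {d : ℕ} (b : Basis (Fin d) F A)

/-- The nilpotent endomorphism `x_1 ↦ x_2 ↦ ⋯ ↦ x_d ↦ 0`. -/
noncomputable def basisShift : Module.End F A :=
  b.constr F fun i => if h : (i : ℕ) + 1 < d then b ⟨i + 1, h⟩ else 0

/-- The coefficient of the first basis vector `x_1`; it is `0` if the basis is empty. -/
noncomputable def leadingCoord : A →ₗ[F] F :=
  b.constr F fun i => if (i : ℕ) = 0 then 1 else 0

/-- The set `{x_1}` that generates `B_d`. Being an image, it also makes sense for an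
empty basis. -/
def leadingSet : Set A :=
  b '' {i | (i : ℕ) = 0}

theorem basisShift_apply_basis (i : Fin d) :
    basisShift b (b i) = if h : (i : ℕ) + 1 < d then b ⟨i + 1, h⟩ else 0 :=
  b.constr_basis F _ i

theorem leadingCoord_apply_basis (i : Fin d) :
    leadingCoord b (b i) = if (i : ℕ) = 0 then 1 else 0 :=
  b.constr_basis F _ i

theorem leadingCoord_basisShift (x : A) : leadingCoord b (basisShift b x) = 0 := by
  have hcomp : leadingCoord b ∘ₗ basisShift b = 0 := b.ext fun i => by
    rw [LinearMap.comp_apply, basisShift_apply_basis]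
    split_ifs <;> simp [leadingCoord_apply_basis]
  exact LinearMap.congr_fun hcomp x

theorem basisShift_pow_apply_basis (j : ℕ) (i : Fin d) :
    (basisShift b ^ j) (b i) = if h : (i : ℕ) + j < d then b ⟨i + j, h⟩ else 0 := by
  induction j with
  | zero => simp
  | succ j ih =>
    rw [pow_succ', Module.End.mul_apply, ih]
    by_cases hj : (i : ℕ) + j < d
    · simp [hj, basisShift_apply_basis, add_assoc]
    · have hj' : ¬(i : ℕ) + (j + 1) < d := by omega
      simp [hj, hj']

theorem basisShift_pow_eq_zero : basisShift b ^ d = 0 :=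
  b.ext fun i => by simp [basisShift_pow_apply_basis]

theorem finite_leadingSet : (leadingSet b).Finite :=
  (Set.toFinite _).image b

theorem ncard_leadingSet_le_one : (leadingSet b).ncard ≤ 1 := by
  have hsub : (leadingSet b).Subsingleton :=
    Set.Subsingleton.image (fun i hi j hj => Fin.ext (hi.trans hj.symm)) b
  exact (Set.ncard_le_one (finite_leadingSet b)).mpr fun _ hx _ hy => hsub hx hy

theorem isWord_leadingSet_basis (i : ℕ) (hi : i < d) :
    IsWord (functionalMul (leadingCoord b) (basisShift b)) (leadingSet b) (i + 1) (b ⟨i, hi⟩) := by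
  induction i with
  | zero => exact .base ⟨⟨0, hi⟩, rfl, rfl⟩
  | succ i ih =>
    have hfirst : b ⟨0, by omega⟩ ∈ leadingSet b := ⟨_, rfl, rfl⟩
    simpa [functionalMul, leadingCoord_apply_basis, basisShift_apply_basis, hi] using
      (ih (by omega)).mul (.base hfirst)

theorem generates_leadingSet :
    Generates F (functionalMul (leadingCoord b) (basisShift b)) (leadingSet b) := by
  rw [Generates, eq_top_iff, ← b.span_eq, span_le]
  rintro _ ⟨i, rfl⟩
  exact subset_span ⟨_, isWord_leadingSet_basis b i i.isLt⟩

theorem lenSet_leadingSet :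
    lenSet F (functionalMul (leadingCoord b) (basisShift b)) (leadingSet b) = d := by
  set ℓ := lenSet F (functionalMul (leadingCoord b) (basisShift b)) (leadingSet b)
  apply le_antisymm
  · exact lenSet_functionalMul_le (leadingCoord_basisShift b) (basisShift_pow_eq_zero b)
      (generates_leadingSet b)
  · calc d = finrank F A := by rw [finrank_eq_card_basis b, Fintype.card_fin]
      _ ≤ ℓ * (leadingSet b).ncard :=
        finrank_le_lenSet_functionalMul_mul_ncard (leadingCoord_basisShift b)
          ⟨d, basisShift_pow_eq_zero b⟩ (generates_leadingSet b) (finite_leadingSet b)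
      _ ≤ ℓ := mul_le_of_le_one_right' (ncard_leadingSet_le_one b)

end BasisShift

theorem amul_eq_functionalMul
    {F B : Type*} [Field F] [NonUnitalNonAssocRing B] [Module F B]
    [SMulCommClass F B B] [IsScalarTower F B B] {d : ℕ} (b : Basis (Fin d) F B)
    (hmul : ∀ i j : Fin d, b i * b j =
      if h : (j : ℕ) = 0 ∧ (i : ℕ) + 1 < d then b ⟨(i : ℕ) + 1, h.2⟩ else 0) :
    amul B = functionalMul (leadingCoord b) (basisShift b) := by
  have hbilin : LinearMap.mul F B =
      (LinearMap.lsmul F B ∘ₗ leadingCoord b).flip ∘ₗ basisShift b := by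
    refine b.ext fun i => b.ext fun j => ?_
    by_cases hj : (j : ℕ) = 0 <;>
      simp [hmul, leadingCoord_apply_basis, basisShift_apply_basis, hj]
  funext x y
  exact LinearMap.congr_fun₂ hbilin x y

theorem leibniz_example_length_eq_dim_general
    {F B : Type*} [Field F] [NonUnitalNonAssocRing B] [Module F B]
    [SMulCommClass F B B] [IsScalarTower F B B]
    (d : ℕ) (b : Basis (Fin d) F B)
    (hmul : ∀ i j : Fin d, b i * b j =
      if h : (j : ℕ) = 0 ∧ (i : ℕ) + 1 < d then b ⟨(i : ℕ) + 1, h.2⟩ else 0) :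
    (∀ x y z : B, (x * y) * z = x * (y * z) + (x * z) * y) ∧
    (∀ S : Set B, Generates F (amul B) S → lenSet F (amul B) S ≤ d) ∧
    (∃ S : Set B, S.Finite ∧ Generates F (amul B) S ∧ lenSet F (amul B) S = d) := by
  have hmul_eq : ∀ x y : B, x * y = functionalMul (leadingCoord b) (basisShift b) x y :=
    congr_fun₂ (amul_eq_functionalMul b hmul)
  rw [amul_eq_functionalMul b hmul]
  refine ⟨fun x y z => ?_, fun S hS => ?_, leadingSet b, finite_leadingSet b,
    generates_leadingSet b, lenSet_leadingSet b⟩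
  · simpa only [hmul_eq] using functionalMul_leibniz (leadingCoord_basisShift b) x y z
  · exact lenSet_functionalMul_le (leadingCoord_basisShift b) (basisShift_pow_eq_zero b) hS

/-- for `d ≥ 3`, the `d`-dimensional algebra `B_d` with basis
`x_1, …, x_d` (here `b 0, …, b (d-1)`) and multiplication `x_i x_1 = x_{i+1}`
(`i = 1, …, d−1`), other products of basis vectors being zero, is a Leibniz algebra
and `l(B_d) = d`. -/
theorem leibniz_example_length_eq_dim
    {F B : Type*} [Field F] [NonUnitalNonAssocRing B] [Module F B]
    [SMulCommClass F B B] [IsScalarTower F B B]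
    (d : ℕ) (hd : 3 ≤ d) (b : Basis (Fin d) F B)
    (hmul : ∀ i j : Fin d, b i * b j =
      if h : (j : ℕ) = 0 ∧ (i : ℕ) + 1 < d then b ⟨(i : ℕ) + 1, h.2⟩ else 0) :
    (∀ x y z : B, (x * y) * z = x * (y * z) + (x * z) * y) ∧
    (∀ S : Set B, S.Finite → Generates F (amul B) S → lenSet F (amul B) S ≤ d) ∧
    (∃ S : Set B, S.Finite ∧ Generates F (amul B) S ∧ lenSet F (amul B) S = d) :=
  have ⟨hleibniz, hle, heq⟩ := leibniz_example_length_eq_dim_general d b hmul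
  ⟨hleibniz, fun S _ => hle S, heq⟩
end

section
/- For every field F and every integer d ≥ 3, the d-dimensional filiform F-algebra A_d with basis x_1, …, x_d and multiplication determined by x_1 x_i = x_{i+1} and x_i x_1 = −x_{i+1} for i = 2, …, d−1, all other products of basis elements being zero, is a Lie algebra and l(A_d) = d − 1. -/
/-!
Framework: length of finite-dimensional not necessarily associative,
not necessarily unital algebras (non-unital convention: `L_0(S) = 0`).
The multiplication of the algebra is passed explicitly as a binary
operation `μ`, so that the same definitions apply to an algebra, to its
commutator algebra, to a Lie bracket, etc.
-/

open Submodule Module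

/-!
The multiplication is `x y = φ(x) D y - φ(y) D x`, where `φ` is the first coordinate and `D` is left
multiplication by `x_1`. As `φ ∘ D = 0`, this is the bracket of a one-dimensional algebra acting on
the abelian ideal `ker φ`, and the Lie identities follow.

Give `x_1` and `x_2` weight `1` and `x_{i+1}` weight `i`; the multiplication is then homogeneous.
Since all weights are positive, a word of length `k` involves only basis vectors of weight at
least `k`, so words of length `d` and more vanish and `l(S) ≤ d - 1` for every generating set `S`.
The set `{x_1, x_2}` is homogeneous of weight `1` and generates the algebra, so its words of length
`k` are homogeneous of weight `k`, and `x_d`, of weight `d - 1`, needs words of length `d - 1`.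
-/

section Words

variable {F A ι : Type*} [Field F] [AddCommGroup A] [Module F A] {μ : A → A → A} {S : Set A}

theorem generates_of_forall_basis_isWord (b : Basis ι F A) (h : ∀ i, ∃ k, IsWord μ S k (b i)) :
    Generates F μ S := by
  rw [Generates, eq_top_iff, ← b.span_eq]
  exact span_mono (Set.range_subset_iff.2 h)

theorem Generates.lset_eq_top {n : ℕ} (hS : Generates F μ S)
    (hzero : ∀ k w, n < k → IsWord μ S k w → w = 0) : Lset F μ S n = ⊤ := by
  rw [eq_top_iff, ← hS, span_le]
  rintro w ⟨k, hw⟩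
  obtain hkn | hnk := le_or_gt k n
  · exact subset_span ⟨k, hkn, hw⟩
  · exact hzero k w hnk hw ▸ zero_mem _

theorem lenSet_eq {n : ℕ} (hn : Lset F μ S n = ⊤) (hle : ∀ k, Lset F μ S k = ⊤ → n ≤ k) :
    lenSet F μ S = n :=
  IsLeast.csInf_eq ⟨hn, hle⟩

end Words

theorem IsWord.mem_of_gradedMul {A σ : Type*} [Mul A] [SetLike σ A] {V : ℕ → σ}
    [SetLike.GradedMul V] {S : Set A} (hS : S ⊆ V 1) {k : ℕ} {w : A}
    (hw : IsWord (amul A) S k w) : w ∈ V k := by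
  induction hw with
  | base ha => exact hS ha
  | mul _ _ hu hv => exact SetLike.mul_mem_graded hu hv

theorem gradedMul_span_image {R A ι κ : Type*} [CommSemiring R] [NonUnitalNonAssocSemiring A]
    [Module R A] [SMulCommClass R A A] [IsScalarTower R A A] [Add κ] {v : ι → A} {I : κ → Set ι}
    (h : ∀ m n, ∀ i ∈ I m, ∀ j ∈ I n, v i * v j ∈ span R (v '' I (m + n))) :
    SetLike.GradedMul fun k => span R (v '' I k) where
  mul_mem m n _ _ hx hy := by
    have hle : map₂ (LinearMap.mul R A) (span R (v '' I m)) (span R (v '' I n)) ≤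
        span R (v '' I (m + n)) := by
      rw [map₂_span_span, span_le, Set.image2_subset_iff]
      rintro _ ⟨i, hi, rfl⟩ _ ⟨j, hj, rfl⟩
      exact h m n i hi j hj
    exact hle (apply_mem_map₂ _ hx hy)

section Homogeneous

variable {ι : Type*} {wt : ι → ℕ}

section CommSemiring

variable {R A : Type*} [CommSemiring R] [NonUnitalNonAssocSemiring A] [Module R A]

/-- `b` is a basis of homogeneous elements for a grading of the algebra `A` by `ℕ` in which
`b i` has degree `wt i`. The grading itself is not recorded: its component of degree `k` is the
span of the `b i` with `wt i = k`. -/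
def IsHomogeneousBasis (b : Basis ι R A) (wt : ι → ℕ) : Prop :=
  ∀ i j, b i * b j ∈ span R (b '' {k | wt k = wt i + wt j})

namespace IsHomogeneousBasis

variable [SMulCommClass R A A] [IsScalarTower R A A] {b : Basis ι R A} {S : Set A}
  {k : ℕ} {w : A}

theorem mem_span_le_wt_of_isWord (hb : IsHomogeneousBasis b wt) (hpos : ∀ i, 1 ≤ wt i)
    (hw : IsWord (amul A) S k w) : w ∈ span R (b '' {i | k ≤ wt i}) := by
  have := gradedMul_span_image (R := R) (v := b) (I := fun k => {i | k ≤ wt i})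
    fun m n i hi j hj => span_mono (Set.image_mono fun l (hl : wt l = _) =>
      (add_le_add hi hj).trans_eq hl.symm) (hb i j)
  refine hw.mem_of_gradedMul (V := fun k => span R (b '' {i | k ≤ wt i})) fun x _ => ?_
  simp [hpos, b.span_eq]

theorem mem_span_wt_eq_of_isWord (hb : IsHomogeneousBasis b wt)
    (hS : S ⊆ span R (b '' {i | wt i = 1})) (hw : IsWord (amul A) S k w) :
    w ∈ span R (b '' {i | wt i = k}) := by
  have := gradedMul_span_image (R := R) (v := b) (I := fun k => {i | wt i = k})
    (by rintro _ _ i rfl j rfl; exact hb i j)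
  exact hw.mem_of_gradedMul (V := fun k => span R (b '' {i | wt i = k})) hS

end IsHomogeneousBasis

end CommSemiring

namespace IsHomogeneousBasis

variable {F A : Type*} [Field F] [NonUnitalNonAssocRing A] [Module F A] [SMulCommClass F A A]
  [IsScalarTower F A A] {b : Basis ι F A} {S : Set A} {k n : ℕ}

theorem lset_eq_top (hb : IsHomogeneousBasis b wt) (hpos : ∀ i, 1 ≤ wt i)
    (hn : ∀ i, wt i ≤ n) (hS : Generates F (amul A) S) : Lset F (amul A) S n = ⊤ := by
  refine hS.lset_eq_top fun k w hk hw => ?_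
  have hempty : {i | k ≤ wt i} = ∅ :=
    Set.eq_empty_of_forall_notMem fun i hi => ((hn i).trans_lt hk).not_ge hi
  simpa [hempty] using hb.mem_span_le_wt_of_isWord hpos hw

theorem wt_le_of_lset_eq_top (hb : IsHomogeneousBasis b wt)
    (hS : S ⊆ span F (b '' {i | wt i = 1})) (hk : Lset F (amul A) S k = ⊤) (i : ι) :
    wt i ≤ k := by
  have hle : Lset F (amul A) S k ≤ span F (b '' {i | wt i ≤ k}) := by
    refine span_le.2 ?_
    rintro w ⟨m, hm, hw⟩
    exact span_mono (Set.image_mono fun _ hi => hi.trans_le hm) (hb.mem_span_wt_eq_of_isWord hS hw)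
  by_contra hi
  exact b.linearIndependent.notMem_span_image hi (hle (hk ▸ mem_top))

end IsHomogeneousBasis

end Homogeneous

theorem jacobi_of_mul_eq_smul_sub_smul {R B : Type*} [CommRing R] [NonUnitalNonAssocRing B]
    [Module R B] {φ : B →ₗ[R] R} {D : B →ₗ[R] B}
    (hmul : ∀ x y : B, x * y = φ x • D y - φ y • D x) (hD : ∀ x, φ (D x) = 0) (x y z : B) :
    (x * y) * z + (y * z) * x + (z * x) * y = 0 := by
  simp only [hmul, map_sub, map_smul, hD, smul_zero, sub_zero, zero_smul, zero_sub]
  module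

/-- `b 0, …, b (d - 1)` is a basis `x_1, …, x_d` of a filiform algebra: the only nonzero products
of basis vectors are `x_1 x_i = x_{i+1}` and `x_i x_1 = -x_{i+1}` for `2 ≤ i < d`. -/
def IsFiliformBasis {R B : Type*} [CommRing R] [NonUnitalNonAssocRing B] [Module R B] {d : ℕ}
    (b : Basis (Fin d) R B) : Prop :=
  ∀ i j : Fin d, b i * b j =
    if h : (i : ℕ) = 0 ∧ 1 ≤ (j : ℕ) ∧ (j : ℕ) + 1 < d then b ⟨(j : ℕ) + 1, h.2.2⟩
    else if h' : (j : ℕ) = 0 ∧ 1 ≤ (i : ℕ) ∧ (i : ℕ) + 1 < d then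
      -b ⟨(i : ℕ) + 1, h'.2.2⟩
    else 0

namespace IsFiliformBasis

section CommRing

variable {R B : Type*} [CommRing R] [NonUnitalNonAssocRing B] [Module R B]
  {d : ℕ} {b : Basis (Fin d) R B}

theorem isHomogeneousBasis (hb : IsFiliformBasis b) :
    IsHomogeneousBasis b fun i => max 1 (i : ℕ) := by
  intro i j
  rw [hb]
  split_ifs with h h'
  · exact subset_span ⟨_, by simp only [Set.mem_ofPred_eq]; omega, rfl⟩
  · exact neg_mem (subset_span ⟨_, by simp only [Set.mem_ofPred_eq]; omega, rfl⟩)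
  · exact zero_mem _

theorem isWord_basis (hb : IsFiliformBasis b) (hd : 2 ≤ d) (i : Fin d) :
    IsWord (amul B) {b ⟨0, by omega⟩, b ⟨1, hd⟩} (max 1 i) (b i) := by
  obtain ⟨i, hi⟩ := i
  induction i with
  | zero => exact .base (Set.mem_insert _ _)
  | succ i ih =>
    obtain rfl | hpos := Nat.eq_zero_or_pos i
    · exact .base (Set.mem_insert_of_mem _ rfl)
    · have hprod : b ⟨0, by omega⟩ * b ⟨i, by omega⟩ = b ⟨i + 1, hi⟩ := by
        rw [hb, dif_pos ⟨rfl, hpos, hi⟩]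
      have hlen : max 1 (i + 1) = 1 + max 1 i := by omega
      rw [← hprod, hlen]
      exact .mul (.base (Set.mem_insert _ _)) (ih (by omega))

variable [NeZero d]

theorem basis_mul_basis_zero (hb : IsFiliformBasis b) (i : Fin d) :
    b i * b 0 = -(b 0 * b i) := by
  rw [hb, hb]
  by_cases hi : 1 ≤ (i : ℕ) ∧ (i : ℕ) + 1 < d <;> simp [hi]

theorem basis_zero_mul_self (hb : IsFiliformBasis b) : b 0 * b 0 = 0 := by
  simp [hb 0 0]

theorem basis_mul_basis_eq_zero (hb : IsFiliformBasis b) {i j : Fin d} (hi : i ≠ 0)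
    (hj : j ≠ 0) : b i * b j = 0 := by
  rw [hb, dif_neg fun h => hi (Fin.ext h.1), dif_neg fun h => hj (Fin.ext h.1)]

variable [SMulCommClass R B B] [IsScalarTower R B B]

theorem mul_eq_coord_smul_sub_coord_smul (hb : IsFiliformBasis b) (x y : B) :
    x * y = b.coord 0 x • (b 0 * y) - b.coord 0 y • (b 0 * x) := by
  let L := LinearMap.mul R B
  let M := (LinearMap.lsmul R B).compl₁₂ (b.coord 0) (L (b 0))
  suffices hL : L = M - M.flip from LinearMap.congr_fun₂ hL x y
  refine LinearMap.ext_basis b b fun i j => ?_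
  suffices b i * b j = b.coord 0 (b i) • (b 0 * b j) - b.coord 0 (b j) • (b 0 * b i) from this
  rcases eq_or_ne i 0 with rfl | hi <;> rcases eq_or_ne j 0 with rfl | hj
  · simp [hb.basis_zero_mul_self]
  · simp [hb.basis_zero_mul_self]
  · simp [hb.basis_zero_mul_self, hb.basis_mul_basis_zero i, hi]
  · simp [hb.basis_mul_basis_eq_zero hi hj, hi, hj]

theorem coord_zero_mul (hb : IsFiliformBasis b) (x y : B) : b.coord 0 (x * y) = 0 := by
  suffices hL : (LinearMap.mul R B).compr₂ (b.coord 0) = 0 from LinearMap.congr_fun₂ hL x y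
  refine LinearMap.ext_basis b b fun i j => ?_
  suffices b.coord 0 (b i * b j) = 0 from this
  have hsucc (k : ℕ) (hk : k + 1 < d) : b.coord 0 (b ⟨k + 1, hk⟩) = 0 := by
    rw [b.coord_apply, b.repr_self]
    exact Finsupp.single_eq_of_ne' fun h => Nat.succ_ne_zero k (congrArg Fin.val h)
  rw [hb]
  split_ifs
  · exact hsucc _ _
  · rw [map_neg, hsucc, neg_zero]
  · exact map_zero _

theorem mul_self_eq_zero (hb : IsFiliformBasis b) (x : B) : x * x = 0 := by
  rw [hb.mul_eq_coord_smul_sub_coord_smul, sub_self]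

theorem jacobi (hb : IsFiliformBasis b) (x y z : B) :
    (x * y) * z + (y * z) * x + (z * x) * y = 0 :=
  jacobi_of_mul_eq_smul_sub_smul (φ := b.coord 0) (D := LinearMap.mulLeft R (b 0))
    hb.mul_eq_coord_smul_sub_coord_smul (hb.coord_zero_mul _) x y z

end CommRing

section Field

variable {F B : Type*} [Field F] [NonUnitalNonAssocRing B] [Module F B] {d : ℕ}
  {b : Basis (Fin d) F B}

theorem generates_pair (hb : IsFiliformBasis b) (hd : 2 ≤ d) :
    Generates F (amul B) {b ⟨0, by omega⟩, b ⟨1, hd⟩} :=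
  generates_of_forall_basis_isWord b fun i => ⟨_, hb.isWord_basis hd i⟩

variable [SMulCommClass F B B] [IsScalarTower F B B]

theorem lset_eq_top (hb : IsFiliformBasis b) (hd : 2 ≤ d) {S : Set B}
    (hS : Generates F (amul B) S) : Lset F (amul B) S (d - 1) = ⊤ :=
  hb.isHomogeneousBasis.lset_eq_top (fun _ => le_max_left _ _) (fun _ => by omega) hS

theorem lenSet_pair (hb : IsFiliformBasis b) (hd : 2 ≤ d) :
    lenSet F (amul B) {b ⟨0, by omega⟩, b ⟨1, hd⟩} = d - 1 := by
  refine lenSet_eq (hb.lset_eq_top hd (hb.generates_pair hd)) fun k hk => ?_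
  have hone : ({b ⟨0, by omega⟩, b ⟨1, hd⟩} : Set B) ⊆
      span F (b '' {i : Fin d | max 1 (i : ℕ) = 1}) :=
    Set.pair_subset (subset_span ⟨_, rfl, rfl⟩) (subset_span ⟨_, rfl, rfl⟩)
  exact (le_max_right _ _).trans
    (hb.isHomogeneousBasis.wt_le_of_lset_eq_top hone hk ⟨d - 1, by omega⟩)

end Field

end IsFiliformBasis

theorem filiform_lie_length_eq_dim_sub_one_general {F B : Type*} [Field F]
    [NonUnitalNonAssocRing B] [Module F B] [SMulCommClass F B B] [IsScalarTower F B B]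
    {d : ℕ} (hd : 2 ≤ d) {b : Basis (Fin d) F B} (hb : IsFiliformBasis b) :
    (∀ x : B, x * x = 0) ∧
    (∀ x y z : B, (x * y) * z + (y * z) * x + (z * x) * y = 0) ∧
    (∀ S : Set B, Generates F (amul B) S → lenSet F (amul B) S ≤ d - 1) ∧
    (∃ S : Set B, S.Finite ∧ Generates F (amul B) S ∧ lenSet F (amul B) S = d - 1) :=
  have : NeZero d := ⟨by omega⟩
  ⟨hb.mul_self_eq_zero, hb.jacobi,
    fun _ hS => Nat.sInf_le (hb.lset_eq_top hd hS),
    _, Set.toFinite _, hb.generates_pair hd, hb.lenSet_pair hd⟩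

/-- for `d ≥ 3`, the `d`-dimensional filiform algebra `A_d` with basis
`x_1, …, x_d` (here `b 0, …, b (d-1)`) and multiplication `x_1 x_i = x_{i+1} = −x_i x_1`
(`i = 2, …, d−1`), other products of basis vectors being zero, is a Lie algebra and
`l(A_d) = d − 1`. -/
theorem filiform_lie_length_eq_dim_sub_one
    {F B : Type*} [Field F] [NonUnitalNonAssocRing B] [Module F B]
    [SMulCommClass F B B] [IsScalarTower F B B]
    (d : ℕ) (hd : 3 ≤ d) (b : Basis (Fin d) F B)
    (hmul : ∀ i j : Fin d, b i * b j =
      if h : (i : ℕ) = 0 ∧ 1 ≤ (j : ℕ) ∧ (j : ℕ) + 1 < d then b ⟨(j : ℕ) + 1, h.2.2⟩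
      else if h' : (j : ℕ) = 0 ∧ 1 ≤ (i : ℕ) ∧ (i : ℕ) + 1 < d then
        -b ⟨(i : ℕ) + 1, h'.2.2⟩
      else 0) :
    (∀ x : B, x * x = 0) ∧
    (∀ x y z : B, (x * y) * z + (y * z) * x + (z * x) * y = 0) ∧
    (∀ S : Set B, S.Finite → Generates F (amul B) S → lenSet F (amul B) S ≤ d - 1) ∧
    (∃ S : Set B, S.Finite ∧ Generates F (amul B) S ∧ lenSet F (amul B) S = d - 1) := by
  obtain ⟨hself, hjacobi, hle, hex⟩ := filiform_lie_length_eq_dim_sub_one_general (by omega) hmul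
  exact ⟨hself, hjacobi, fun S _ => hle S, hex⟩
end

section
/- Every finite-dimensional Zinbiel algebra over a field F is sliding; consequently, every finite-dimensional Zinbiel algebra A of dimension d ≥ 2 satisfies l(A) ≤ d. -/
/-!
Framework: length of finite-dimensional not necessarily associative,
not necessarily unital algebras (non-unital convention: `L_0(S) = 0`).
The multiplication of the algebra is passed explicitly as a binary
operation `μ`, so that the same definitions apply to an algebra, to its
commutator algebra, to a Lie bracket, etc.
-/

open Submodule Module

/-!
Repeated use of `a(bc) = (ab)c + (ba)c` turns every word into a sum of words of the same length in
which each right factor is a generator. So the subalgebra generated by `S` is reached from `S` by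
right multiplications by elements of `S` alone, and if `L_{k+1}(S) = L_k(S)` then `L_k(S)`, being
stable under these multiplications, is already the whole algebra. The dimensions of the `L_k(S)`
therefore increase strictly from `0` until `A` is reached, which takes at most `dim A` steps.
-/

theorem apply_finrank_eq_top_of_monotone {K V : Type*} [DivisionRing K] [AddCommGroup V]
    [Module K V] [FiniteDimensional K V] {f : ℕ → Submodule K V} (hf : Monotone f)
    (hstep : ∀ k, f k = f (k + 1) → f k = ⊤) : f (finrank K V) = ⊤ := by
  have hgrow : ∀ k, f k ≠ ⊤ → k ≤ finrank K (f k) := by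
    intro k
    induction k with
    | zero => exact fun _ => Nat.zero_le _
    | succ k ih =>
      intro hsucc
      have htop : f k ≠ ⊤ := fun h => hsucc (top_le_iff.1 (h ▸ hf k.le_succ))
      have hlt : f k < f (k + 1) := (hf k.le_succ).lt_of_ne fun h => htop (hstep k h)
      exact (ih htop).trans_lt (finrank_lt_finrank_of_lt hlt)
  by_contra htop
  exact htop (eq_top_of_finrank_eq (le_antisymm (finrank_le _) (hgrow _ htop)))

/-- The (right-)Zinbiel identity, which defines Zinbiel algebras; it does not involve the scalars,
so no base field is mentioned. -/
def IsZinbiel (B : Type*) [Mul B] [Add B] : Prop :=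
  ∀ x y z : B, x * (y * z) = (x * y + y * x) * z

theorem IsZinbiel.isSliding (F : Type*) {B : Type*} [Field F] [NonUnitalNonAssocRing B]
    [Module F B] (hB : IsZinbiel B) : IsSliding F (amul B) := by
  refine Or.inl fun x y z => ?_
  have hsplit : amul B z (amul B x y) = z * x * y + x * z * y := by
    rw [← add_mul]
    exact hB z x y
  rw [hsplit]
  exact add_mem (subset_span (by simp [Qrset, amul])) (subset_span (by simp [Qrset, amul]))

section Words

variable {B : Type*} [NonUnitalNonAssocSemiring B] {S : Set B} {M : AddSubmonoid B}

/- Rewriting `a(bc)` as `(ab)c + (ba)c` keeps the total length and shortens the right factor, so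
the induction is on the right factor, with the left factor arbitrary. -/
theorem IsZinbiel.mul_mem_of_forall_shorter_mem (hB : IsZinbiel B)
    (hM : ∀ x ∈ M, ∀ s ∈ S, x * s ∈ M) {N : ℕ}
    (hN : ∀ k < N, ∀ w, IsWord (amul B) S k w → w ∈ M) {m n : ℕ} {a b : B}
    (ha : IsWord (amul B) S m a) (hb : IsWord (amul B) S n b) (hmn : m + n ≤ N) :
    a * b ∈ M := by
  induction hb generalizing m a with
  | base hs => exact hM _ (hN m (by lia) a ha) _ hs
  | @mul p q b c hb _ _ ihc =>
    change a * (b * c) ∈ M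
    rw [hB a b c, add_mul]
    exact add_mem (ihc (ha.mul hb) (by lia)) (ihc (hb.mul ha) (by lia))

theorem IsZinbiel.isWord_mem_of_mul_mem (hB : IsZinbiel B) (hS : S ⊆ M)
    (hM : ∀ x ∈ M, ∀ s ∈ S, x * s ∈ M) {k : ℕ} {w : B} (hw : IsWord (amul B) S k w) :
    w ∈ M := by
  induction k using Nat.strong_induction_on generalizing w with
  | _ k ih =>
    cases hw with
    | base hs => exact hS hs
    | mul ha hb => exact hB.mul_mem_of_forall_shorter_mem hM (fun j hj _ => ih j hj) ha hb le_rfl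

end Words

theorem monotone_Lset (F : Type*) {A : Type*} [Field F] [AddCommGroup A] [Module F A]
    (μ : A → A → A) (S : Set A) : Monotone (Lset F μ S) :=
  fun _ _ hij => span_mono fun _ ⟨k, hk, hw⟩ => ⟨k, hk.trans hij, hw⟩

theorem IsWord.mem_Lset {F A : Type*} [Field F] [AddCommGroup A] [Module F A] {μ : A → A → A}
    {S : Set A} {k n : ℕ} {w : A} (hw : IsWord μ S k w) (hk : k ≤ n) : w ∈ Lset F μ S n :=
  subset_span ⟨k, hk, hw⟩

section Length

variable {F B : Type*} [Field F] [NonUnitalNonAssocRing B] [Module F B] [IsScalarTower F B B]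
  {S : Set B}

theorem IsWord.mul_mem_Lset {k n : ℕ} {x w : B} (hw : IsWord (amul B) S n w)
    (hx : x ∈ Lset F (amul B) S k) : x * w ∈ Lset F (amul B) S (k + n) := by
  suffices hle : Lset F (amul B) S k ≤
      (Lset F (amul B) S (k + n)).comap (LinearMap.mulRight F w) from hle hx
  refine span_le.2 fun v ⟨m, hm, hv⟩ => ?_
  exact (hv.mul hw).mem_Lset (Nat.add_le_add_right hm n)

theorem IsZinbiel.isWord_mem_Lset_of_succ_le (hB : IsZinbiel B) {k n : ℕ} {w : B}
    (hk : Lset F (amul B) S (k + 1) ≤ Lset F (amul B) S k) (hw : IsWord (amul B) S n w) :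
    w ∈ Lset F (amul B) S k := by
  refine hB.isWord_mem_of_mul_mem (M := (Lset F (amul B) S k).toAddSubmonoid) ?_ ?_ hw
  · exact fun s hs => hk ((IsWord.base hs).mem_Lset (by lia))
  · exact fun x hx s hs => hk ((IsWord.base hs).mul_mem_Lset hx)

theorem IsZinbiel.Lset_eq_top_of_eq_succ (hB : IsZinbiel B) (hgen : Generates F (amul B) S)
    {k : ℕ} (hk : Lset F (amul B) S k = Lset F (amul B) S (k + 1)) :
    Lset F (amul B) S k = ⊤ := by
  rw [eq_top_iff, ← hgen]
  exact span_le.2 fun w ⟨n, hw⟩ => hB.isWord_mem_Lset_of_succ_le hk.ge hw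

end Length

theorem IsZinbiel.Lset_finrank_eq_top {F B : Type*} [Field F] [NonUnitalNonAssocRing B]
    [Module F B] [IsScalarTower F B B] [FiniteDimensional F B] (hB : IsZinbiel B) {S : Set B}
    (hgen : Generates F (amul B) S) : Lset F (amul B) S (finrank F B) = ⊤ :=
  apply_finrank_eq_top_of_monotone (monotone_Lset F (amul B) S)
    fun _ => hB.Lset_eq_top_of_eq_succ hgen

theorem zinbiel_isSliding_and_length_le_dim_general
    {F B : Type*} [Field F] [NonUnitalNonAssocRing B] [Module F B]
    (hzinbiel : ∀ x y z : B, x * (y * z) = (x * y + y * x) * z) :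
    IsSliding F (amul B) ∧
    ∀ [IsScalarTower F B B] [FiniteDimensional F B] (S : Set B),
      Generates F (amul B) S → lenSet F (amul B) S ≤ finrank F B := by
  have hB : IsZinbiel B := hzinbiel
  exact ⟨hB.isSliding F, fun _ hgen => Nat.sInf_le (hB.Lset_finrank_eq_top hgen)⟩

/-- every finite-dimensional Zinbiel algebra is sliding; consequently every
finite-dimensional Zinbiel algebra of dimension `d ≥ 2` has length at most `d`. -/
theorem zinbiel_isSliding_and_length_le_dim
    {F B : Type*} [Field F] [NonUnitalNonAssocRing B] [Module F B]
    [SMulCommClass F B B] [IsScalarTower F B B] [FiniteDimensional F B]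
    (hzinbiel : ∀ x y z : B, x * (y * z) = (x * y + y * x) * z) :
    IsSliding F (amul B) ∧
    (2 ≤ finrank F B →
      ∀ S : Set B, S.Finite → Generates F (amul B) S →
        lenSet F (amul B) S ≤ finrank F B) := by
  obtain ⟨hsliding, hlength⟩ := zinbiel_isSliding_and_length_le_dim_general (F := F) hzinbiel
  exact ⟨hsliding, fun _ S _ hgen => hlength S hgen⟩
end

section
/- For every integer d ≥ 3, the d-dimensional real algebra Z_d with basis x_1, …, x_d and multiplication determined by x_i x_j = (j/(i+j))·x_{i+j} whenever i + j ≤ d and x_i x_j = 0 whenever i + j > d, is a Zinbiel algebra and l(Z_d) = d. -/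
/-!
Framework: length of finite-dimensional not necessarily associative,
not necessarily unital algebras (non-unital convention: `L_0(S) = 0`).
The multiplication of the algebra is passed explicitly as a binary
operation `μ`, so that the same definitions apply to an algebra, to its
commutator algebra, to a Lie bracket, etc.
-/

open Submodule Module

/-!
Read `x_n` as the monomial `t ^ n`. The product of `Z_d` is then `f ⋆ g = ∫₀ f g'`, taken modulo
`t ^ (d + 1)`. Integration by parts gives `f ⋆ g + g ⋆ f = f g`, and both sides of the Zinbiel
identity equal `∫₀ f g h'`. A word of length `k` is divisible by `t ^ k`, hence vanishes for
`k > d`, which bounds every length by `d`. The words of length `k` in `x_1 = t` are multiples of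
`t ^ k`, so `L_k({x_1})` has dimension at most `k` and cannot be the whole algebra for `k < d`.
-/

section Length

variable {F A : Type*} [Field F] [AddCommGroup A] [Module F A] {μ : A → A → A} {S : Set A}

lemma lenSet_le_of_Lset_eq_top {k : ℕ} (h : Lset F μ S k = ⊤) : lenSet F μ S ≤ k :=
  Nat.sInf_le h

lemma Lset_lenSet_eq_top {k : ℕ} (h : Lset F μ S k = ⊤) : Lset F μ S (lenSet F μ S) = ⊤ :=
  Nat.sInf_mem (s := {k | Lset F μ S k = ⊤}) ⟨k, h⟩

lemma Generates.Lset_eq_top_of_isWord_eq_zero {d : ℕ} (hS : Generates F μ S)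
    (hd : ∀ k w, d < k → IsWord μ S k w → w = 0) : Lset F μ S d = ⊤ := by
  rw [Lset, eq_top_iff, ← hS, span_le]
  rintro w ⟨k, hw⟩
  rcases le_or_gt k d with hk | hk
  · exact subset_span ⟨k, hk, hw⟩
  · rw [hd k w hk hw]
    exact zero_mem _

end Length

lemma zinbiel_of_span_eq_top {R A : Type*} [Semiring R] [NonUnitalNonAssocSemiring A] [Module R A]
    [SMulCommClass R A A] [IsScalarTower R A A] {s : Set A} (hs : span R s = ⊤)
    (h : ∀ x ∈ s, ∀ y ∈ s, ∀ z ∈ s, x * (y * z) = (x * y + y * x) * z) (x y z : A) :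
    x * (y * z) = (x * y + y * x) * z := by
  have mem (u : A) : u ∈ span R s := hs ▸ mem_top
  induction mem x using span_induction with
  | zero => simp
  | add u v _ _ hu hv => simp only [add_mul, mul_add] at hu hv ⊢; rw [hu, hv]; abel
  | smul c u _ hu => simp only [smul_mul_assoc, mul_smul_comm, ← smul_add, hu]
  | mem x hx =>
  induction mem y using span_induction with
  | zero => simp
  | add u v _ _ hu hv => simp only [add_mul, mul_add] at hu hv ⊢; rw [hu, hv]; abel
  | smul c u _ hu => simp only [smul_mul_assoc, mul_smul_comm, ← smul_add, hu]
  | mem y hy =>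
  induction mem z using span_induction with
  | zero => simp
  | add u v _ _ hu hv => simp only [mul_add, hu, hv]
  | smul c u _ hu => simp only [mul_smul_comm, hu]
  | mem z hz => exact h x hx y hy z hz

/-- The family `X 1, X 2, …` multiplies like the monomials `t, t ^ 2, …` under the product
`f ⋆ g = ∫₀ f g'`. The terms need not be independent or nonzero, so that truncations of the
monomials are included. -/
def IsMonomialFamily (F : Type*) {B : Type*} [Field F] [NonUnitalNonAssocRing B] [Module F B]
    (X : ℕ+ → B) : Prop :=
  ∀ i j : ℕ+, X i * X j = ((j : F) / (i + j)) • X (i + j)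

namespace IsMonomialFamily

variable {F B : Type*} [Field F] [NonUnitalNonAssocRing B] [Module F B] {X : ℕ+ → B}

section CharZero

variable [CharZero F]

lemma mul_add_mul_swap (hX : IsMonomialFamily F X) (i j : ℕ+) :
    X i * X j + X j * X i = X (i + j) := by
  have hij : (i : F) + j ≠ 0 := by exact_mod_cast (i + j).ne_zero
  have hcoeff : (j : F) / (i + j) + i / (j + i) = 1 := by
    rw [add_comm (j : F) i, ← add_div, add_comm (j : F) i, div_self hij]
  rw [hX i j, hX j i, add_comm j i, ← add_smul, hcoeff, one_smul]

lemma mul_mul_eq_add_mul [SMulCommClass F B B] (hX : IsMonomialFamily F X) (i j k : ℕ+) :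
    X i * (X j * X k) = X (i + j) * X k := by
  have hjk : (j : F) + k ≠ 0 := by exact_mod_cast (j + k).ne_zero
  rw [hX j k, mul_smul_comm, hX i (j + k), hX (i + j) k, smul_smul, ← add_assoc i j k]
  congr 1
  push_cast
  rw [div_mul_div_cancel₀ hjk, add_assoc]

lemma zinbiel [SMulCommClass F B B] [IsScalarTower F B B] (hX : IsMonomialFamily F X)
    (hspan : span F (Set.range X) = ⊤) (x y z : B) : x * (y * z) = (x * y + y * x) * z := by
  refine zinbiel_of_span_eq_top hspan ?_ x y z
  rintro _ ⟨i, rfl⟩ _ ⟨j, rfl⟩ _ ⟨k, rfl⟩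
  rw [hX.mul_mul_eq_add_mul, hX.mul_add_mul_swap]

lemma isWord_inv_smul [SMulCommClass F B B] (hX : IsMonomialFamily F X) (n : ℕ+) :
    IsWord (amul B) {X 1} n ((n : F)⁻¹ • X n) := by
  induction n using PNat.recOn with
  | one => simpa using IsWord.base (μ := amul B) (Set.mem_singleton (X 1))
  | succ n ih =>
    have hn : (n : F) ≠ 0 := by exact_mod_cast n.ne_zero
    have hmul : X 1 * ((n : F)⁻¹ • X n) = ((n + 1 : ℕ+) : F)⁻¹ • X (n + 1) := by
      rw [mul_smul_comm, hX 1 n, smul_smul, add_comm 1 n]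
      congr 1
      push_cast
      rw [← mul_div_assoc, inv_mul_cancel₀ hn, one_div, add_comm]
    have hw := IsWord.mul (IsWord.base (Set.mem_singleton (X 1))) ih
    rwa [amul, hmul, add_comm] at hw

lemma generates_singleton_one [SMulCommClass F B B] (hX : IsMonomialFamily F X)
    (hspan : span F (Set.range X) = ⊤) : Generates F (amul B) {X 1} := by
  rw [Generates, eq_top_iff, ← hspan, span_le]
  rintro _ ⟨n, rfl⟩
  have hn : (n : F)⁻¹ ≠ 0 := inv_ne_zero (by exact_mod_cast n.ne_zero)
  exact (smul_mem_iff _ hn).1 (subset_span ⟨n, hX.isWord_inv_smul n⟩)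

end CharZero

variable [SMulCommClass F B B] [IsScalarTower F B B]

lemma mul_mem_span_image (hX : IsMonomialFamily F X) {r s t : Set ℕ+}
    (hst : ∀ i ∈ s, ∀ j ∈ t, i + j ∈ r) {u v : B} (hu : u ∈ span F (X '' s))
    (hv : v ∈ span F (X '' t)) : u * v ∈ span F (X '' r) := by
  have huv := apply_mem_map₂ (LinearMap.mul F B) hu hv
  rw [map₂_span_span] at huv
  refine span_le.2 ?_ huv
  rintro _ ⟨_, ⟨i, hi, rfl⟩, _, ⟨j, hj, rfl⟩, rfl⟩
  simp only [LinearMap.mul_apply', hX i j]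
  exact smul_mem _ _ (subset_span ⟨i + j, hst i hi j hj, rfl⟩)

lemma isWord_mem_span_image (hX : IsMonomialFamily F X) {s : ℕ → Set ℕ+}
    (hs : ∀ m n, ∀ i ∈ s m, ∀ j ∈ s n, i + j ∈ s (m + n)) {S : Set B}
    (hS : S ⊆ span F (X '' s 1)) {k : ℕ} {w : B} (hw : IsWord (amul B) S k w) :
    w ∈ span F (X '' s k) := by
  induction hw with
  | base ha => exact hS ha
  | mul _ _ hu hv => exact hX.mul_mem_span_image (hs _ _) hu hv

lemma isWord_eq_zero (hX : IsMonomialFamily F X) (hspan : span F (Set.range X) = ⊤) {d : ℕ}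
    (hzero : ∀ n : ℕ+, d < n → X n = 0) {S : Set B} {k : ℕ} {w : B} (hk : d < k)
    (hw : IsWord (amul B) S k w) : w = 0 := by
  have hmem : w ∈ span F (X '' {n | k ≤ n}) := by
    refine hX.isWord_mem_span_image (s := fun k ↦ {n | k ≤ n}) ?_ ?_ hw
    · intro m n i (hi : m ≤ i) j (hj : n ≤ j)
      exact add_le_add hi hj
    · have huniv : {n : ℕ+ | 1 ≤ (n : ℕ)} = Set.univ := Set.eq_univ_of_forall fun n ↦ n.pos
      rw [huniv, Set.image_univ, hspan]
      exact Set.subset_univ S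
  rw [← mem_bot F]
  refine span_le.2 ?_ hmem
  rintro _ ⟨n, hn, rfl⟩
  exact hzero n (hk.trans_le hn)

lemma isWord_singleton_one_mem_span (hX : IsMonomialFamily F X) {k : ℕ} {w : B}
    (hw : IsWord (amul B) {X 1} k w) : w ∈ span F (X '' {n | n = k}) := by
  refine hX.isWord_mem_span_image (s := fun k ↦ {n | n = k}) ?_ ?_ hw
  · rintro _ _ i rfl j rfl
    exact PNat.add_coe i j
  · rw [Set.singleton_subset_iff]
    exact subset_span ⟨1, rfl, rfl⟩

lemma finrank_Lset_singleton_one_le (hX : IsMonomialFamily F X) (k : ℕ) :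
    finrank F (Lset F (amul B) {X 1} k) ≤ k := by
  let Y : Fin k → B := fun i ↦ X (Nat.succPNat i)
  have hle : Lset F (amul B) {X 1} k ≤ span F (Set.range Y) := by
    refine span_le.2 ?_
    rintro w ⟨m, hm, hw⟩
    refine span_mono ?_ (hX.isWord_singleton_one_mem_span hw)
    rintro _ ⟨n, rfl, rfl⟩
    exact ⟨⟨n.natPred, by have := n.natPred_add_one; omega⟩, by simp [Y]⟩
  calc finrank F (Lset F (amul B) {X 1} k)
      ≤ finrank F (span F (Set.range Y)) := by
        have := FiniteDimensional.span_of_finite F (Set.finite_range Y)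
        exact finrank_mono hle
    _ ≤ Fintype.card (Fin k) := finrank_range_le_card Y
    _ = k := Fintype.card_fin k

end IsMonomialFamily

/-- The sequence `v 0, …, v (d - 1), 0, 0, …`, indexed from `1` to match the numbering
`x_1, …, x_d` of the basis of `Z_d`. -/
def zeroExtend {B : Type*} [Zero B] {d : ℕ} (v : Fin d → B) (n : ℕ+) : B :=
  if h : n.natPred < d then v ⟨n.natPred, h⟩ else 0

section ZeroExtend

variable {B : Type*} {d : ℕ}

lemma zeroExtend_succPNat [Zero B] (v : Fin d → B) (n : ℕ) :
    zeroExtend v n.succPNat = if h : n < d then v ⟨n, h⟩ else 0 :=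
  rfl

lemma zeroExtend_of_lt [Zero B] (v : Fin d → B) {n : ℕ+} (h : d < n) : zeroExtend v n = 0 :=
  dif_neg (by have := n.natPred_add_one; omega)

lemma range_subset_range_zeroExtend [Zero B] (v : Fin d → B) :
    Set.range v ⊆ Set.range (zeroExtend v) := by
  rintro _ ⟨i, rfl⟩
  exact ⟨Nat.succPNat i, by simp [zeroExtend_succPNat]⟩

lemma isMonomialFamily_zeroExtend {F : Type*} [Field F] [NonUnitalNonAssocRing B] [Module F B]
    {v : Fin d → B}
    (hmul : ∀ i j : Fin d, v i * v j =
      if h : (i : ℕ) + j + 1 < d then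
        (((j : ℕ) + 1 : F) / ((i : ℕ) + (j : ℕ) + 2)) • v ⟨i + j + 1, h⟩
      else 0) :
    IsMonomialFamily F (zeroExtend v) := by
  intro i j
  obtain ⟨m, rfl⟩ : ∃ m : ℕ, m.succPNat = i := ⟨_, i.succPNat_natPred⟩
  obtain ⟨n, rfl⟩ : ∃ n : ℕ, n.succPNat = j := ⟨_, j.succPNat_natPred⟩
  have hadd : m.succPNat + n.succPNat = (m + n + 1).succPNat := by
    apply PNat.eq
    simp only [PNat.add_coe, Nat.succPNat_coe, Nat.succ_eq_add_one]
    omega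
  have hcoeff : ((n.succPNat : ℕ) : F) / ((m.succPNat : ℕ) + (n.succPNat : ℕ)) =
      (n + 1) / (m + n + 2) := by
    simp only [Nat.succPNat_coe, Nat.succ_eq_add_one, Nat.cast_add, Nat.cast_one]
    ring
  simp only [hadd, hcoeff, zeroExtend_succPNat]
  by_cases hmn : m + n + 1 < d
  · rw [dif_pos (by omega), dif_pos (by omega), dif_pos hmn, hmul]
    exact dif_pos hmn
  · rw [dif_neg hmn, smul_zero]
    split_ifs with hm hn
    · exact (hmul _ _).trans (dif_neg hmn)
    all_goals simp

end ZeroExtend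

theorem zinbiel_example_length_eq_dim_general
    {F B : Type*} [Field F] [CharZero F] [NonUnitalNonAssocRing B] [Module F B]
    [SMulCommClass F B B] [IsScalarTower F B B] (d : ℕ) (b : Basis (Fin d) F B)
    (hmul : ∀ i j : Fin d, b i * b j =
      if h : (i : ℕ) + j + 1 < d then
        (((j : ℕ) + 1 : F) / ((i : ℕ) + (j : ℕ) + 2)) • b ⟨i + j + 1, h⟩
      else 0) :
    (∀ x y z : B, x * (y * z) = (x * y + y * x) * z) ∧
    (∀ S : Set B, Generates F (amul B) S → lenSet F (amul B) S ≤ d) ∧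
    ∃ x : B, Generates F (amul B) {x} ∧ lenSet F (amul B) {x} = d := by
  have hX : IsMonomialFamily F (zeroExtend b) := isMonomialFamily_zeroExtend hmul
  have hspan : span F (Set.range (zeroExtend b)) = ⊤ :=
    top_unique (b.span_eq.ge.trans (span_mono (range_subset_range_zeroExtend b)))
  have htop (S : Set B) (hS : Generates F (amul B) S) : Lset F (amul B) S d = ⊤ :=
    hS.Lset_eq_top_of_isWord_eq_zero fun _ _ ↦ hX.isWord_eq_zero hspan fun _ ↦ zeroExtend_of_lt b
  have hgen := hX.generates_singleton_one hspan
  refine ⟨hX.zinbiel hspan, fun S hS ↦ lenSet_le_of_Lset_eq_top (htop S hS), zeroExtend b 1, hgen,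
    (lenSet_le_of_Lset_eq_top (htop _ hgen)).antisymm ?_⟩
  calc d = finrank F B := by rw [finrank_eq_card_basis b, Fintype.card_fin]
    _ = finrank F (Lset F (amul B) {zeroExtend b 1} (lenSet F (amul B) {zeroExtend b 1})) := by
      rw [Lset_lenSet_eq_top (htop _ hgen), finrank_top]
    _ ≤ lenSet F (amul B) {zeroExtend b 1} := hX.finrank_Lset_singleton_one_le _

/-- for `d ≥ 3`, the `d`-dimensional real algebra `Z_d` with basis
`x_1, …, x_d` (here `b 0, …, b (d-1)`, `b i` standing for `x_{i+1}`) and multiplication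
`x_i x_j = (j/(i+j)) x_{i+j}` if `i + j ≤ d` and `x_i x_j = 0` otherwise, is a Zinbiel
algebra and `l(Z_d) = d`. -/
theorem zinbiel_example_length_eq_dim
    {B : Type*} [NonUnitalNonAssocRing B] [Module ℝ B]
    [SMulCommClass ℝ B B] [IsScalarTower ℝ B B]
    (d : ℕ) (hd : 3 ≤ d) (b : Basis (Fin d) ℝ B)
    (hmul : ∀ i j : Fin d, b i * b j =
      if h : (i : ℕ) + (j : ℕ) + 2 ≤ d then
        ((((j : ℕ) : ℝ) + 1) / (((i : ℕ) : ℝ) + ((j : ℕ) : ℝ) + 2)) •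
          b ⟨(i : ℕ) + (j : ℕ) + 1, by omega⟩
      else 0) :
    (∀ x y z : B, x * (y * z) = (x * y + y * x) * z) ∧
    (∀ S : Set B, S.Finite → Generates ℝ (amul B) S → lenSet ℝ (amul B) S ≤ d) ∧
    (∃ S : Set B, S.Finite ∧ Generates ℝ (amul B) S ∧ lenSet ℝ (amul B) S = d) := by
  obtain ⟨hzinbiel, hle, x, hx⟩ := zinbiel_example_length_eq_dim_general d b hmul
  exact ⟨hzinbiel, fun S _ ↦ hle S, {x}, Set.finite_singleton x, hx⟩
end

section
/- For every field F, the 4-dimensional non-unital F-algebra R with basis e_1, e_2, e_3, e_4 and multiplication determined by e_1 e_1 = e_2, e_1 e_2 = e_3, e_3 e_2 = e_4, all other products of basis elements being zero, is a Vinberg (right-symmetric) algebra, i.e. it satisfies (xy)z − x(yz) = (xz)y − x(zy) for all x, y, z ∈ R; moreover {e_1} is a generating set of R with l({e_1}) = 5, so l(R) ≥ 5 > 4 = dim R. -/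
/-!
Framework: length of finite-dimensional not necessarily associative,
not necessarily unital algebras (non-unital convention: `L_0(S) = 0`).
The multiplication of the algebra is passed explicitly as a binary
operation `μ`, so that the same definitions apply to an algebra, to its
commutator algebra, to a Lie bracket, etc.
-/

open Submodule Module

/-!
Give `e₁, e₂, e₃, e₄` the weights `1, 2, 3, 5`. Weights add up in nonzero products of basis
vectors, and each `eᵢ` is itself a word in `e₁` of length equal to its weight, so `L_k({e₁})` is
spanned by the `eᵢ` of weight at most `k`; the length is therefore the largest weight. Right
symmetry holds for a strong reason: both `(xy)z` and `x(yz)` are already symmetric in `y` and `z`.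
-/

section Filtration

variable {F A : Type*} [Field F] [AddCommGroup A] [Module F A] {μ : A → A → A} {S : Set A}

lemma IsWord.mem_of_filtration {W : ℕ → Submodule F A} (hS : S ⊆ W 1)
    (hmul : ∀ m n, ∀ a ∈ W m, ∀ b ∈ W n, μ a b ∈ W (m + n)) {k : ℕ} {w : A}
    (hw : IsWord μ S k w) : w ∈ W k := by
  induction hw with
  | base ha => exact hS ha
  | mul _ _ iha ihb => exact hmul _ _ _ iha _ ihb

lemma Lset_le_of_filtration {W : ℕ → Submodule F A} (hW : Monotone W) (hS : S ⊆ W 1)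
    (hmul : ∀ m n, ∀ a ∈ W m, ∀ b ∈ W n, μ a b ∈ W (m + n)) (k : ℕ) :
    Lset F μ S k ≤ W k :=
  span_le.2 fun _ ⟨_, hm, hw⟩ => hW hm (hw.mem_of_filtration hS hmul)

lemma generates_of_Lset_eq_top {k : ℕ} (h : Lset F μ S k = ⊤) : Generates F μ S :=
  top_le_iff.1 (h.ge.trans (span_mono fun _ ⟨m, _, hw⟩ => ⟨m, hw⟩))

end Filtration

section WeightFiltration

/-- The increasing filtration attached to a family `v` of vectors with weights `wt`: level `k` is
spanned by the vectors of weight at most `k`. It is compared with `k ↦ L_k(S)`. -/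
def weightFiltration (R : Type*) {ι M : Type*} [Semiring R] [AddCommMonoid M] [Module R M]
    (v : ι → M) (wt : ι → ℕ) (k : ℕ) : Submodule R M :=
  span R (v '' {i | wt i ≤ k})

section Module

variable {ι R M : Type*} [Semiring R] [AddCommMonoid M] [Module R M]

lemma mem_weightFiltration (v : ι → M) (wt : ι → ℕ) {i : ι} {k : ℕ} (hi : wt i ≤ k) :
    v i ∈ weightFiltration R v wt k :=
  subset_span ⟨i, hi, rfl⟩

lemma weightFiltration_mono (v : ι → M) (wt : ι → ℕ) : Monotone (weightFiltration R v wt) :=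
  fun _ _ hkl => span_mono (Set.image_mono fun _ hi => le_trans hi hkl)

lemma weightFiltration_basis_eq_top_iff [Nontrivial R] (e : Basis ι R M) (wt : ι → ℕ) {k : ℕ} :
    weightFiltration R e wt k = ⊤ ↔ ∀ i, wt i ≤ k := by
  refine ⟨fun h i => e.self_mem_span_image.1 (h.ge mem_top), fun h => ?_⟩
  rw [← top_le_iff, ← e.span_eq, span_le]
  exact Set.range_subset_iff.2 fun i => mem_weightFiltration e wt (h i)

end Module

lemma mul_mem_weightFiltration {ι R A : Type*} [CommSemiring R] [NonUnitalNonAssocSemiring A]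
    [Module R A] [SMulCommClass R A A] [IsScalarTower R A A] {v : ι → A} {wt : ι → ℕ}
    (hv : ∀ i j, v i * v j ∈ weightFiltration R v wt (wt i + wt j)) {m n : ℕ} {a b : A}
    (ha : a ∈ weightFiltration R v wt m) (hb : b ∈ weightFiltration R v wt n) :
    a * b ∈ weightFiltration R v wt (m + n) := by
  have hab := apply_mem_map₂ (LinearMap.mul R A) ha hb
  rw [weightFiltration, weightFiltration, map₂_span_span] at hab
  refine span_le.2 ?_ hab
  rintro _ ⟨_, ⟨i, hi, rfl⟩, _, ⟨j, hj, rfl⟩, rfl⟩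
  exact weightFiltration_mono v wt (add_le_add hi hj) (hv i j)

variable {ι F A : Type*} [Field F] [NonUnitalNonAssocRing A] [Module F A]
  [SMulCommClass F A A] [IsScalarTower F A A] {S : Set A} {wt : ι → ℕ}

theorem Lset_eq_weightFiltration {v : ι → A} (hS : S ⊆ weightFiltration F v wt 1)
    (hv : ∀ i j, v i * v j ∈ weightFiltration F v wt (wt i + wt j))
    (hword : ∀ i, IsWord (amul A) S (wt i) (v i)) (k : ℕ) :
    Lset F (amul A) S k = weightFiltration F v wt k := by
  apply le_antisymm
  · exact Lset_le_of_filtration (weightFiltration_mono v wt) hS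
      (fun _ _ _ ha _ hb => mul_mem_weightFiltration hv ha hb) k
  · refine span_mono ?_
    rintro _ ⟨i, hi, rfl⟩
    exact ⟨wt i, hi, hword i⟩

theorem Lset_eq_top_iff_of_weights {e : Basis ι F A} (hS : S ⊆ weightFiltration F e wt 1)
    (he : ∀ i j, e i * e j ∈ weightFiltration F e wt (wt i + wt j))
    (hword : ∀ i, IsWord (amul A) S (wt i) (e i)) {k : ℕ} :
    Lset F (amul A) S k = ⊤ ↔ ∀ i, wt i ≤ k := by
  rw [Lset_eq_weightFiltration hS he hword, weightFiltration_basis_eq_top_iff]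

theorem lenSet_eq_sup_weights [Fintype ι] {e : Basis ι F A}
    (hS : S ⊆ weightFiltration F e wt 1)
    (he : ∀ i j, e i * e j ∈ weightFiltration F e wt (wt i + wt j))
    (hword : ∀ i, IsWord (amul A) S (wt i) (e i)) :
    lenSet F (amul A) S = Finset.univ.sup wt := by
  have hlevels : {k | Lset F (amul A) S k = ⊤} = Set.Ici (Finset.univ.sup wt) := by
    ext k
    simp [Lset_eq_top_iff_of_weights hS he hword]
  rw [lenSet, hlevels, csInf_Ici]

end WeightFiltration

/-- The multiplication table `e₁e₁ = e₂`, `e₁e₂ = e₃`, `e₃e₂ = e₄` of the example, all other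
products being zero, for a family indexed from `0`. -/
structure HasVinbergTable {B : Type*} [Mul B] [Zero B] (e : Fin 4 → B) : Prop where
  zero_mul_zero : e 0 * e 0 = e 1
  zero_mul_one : e 0 * e 1 = e 2
  two_mul_one : e 2 * e 1 = e 3
  mul_eq_zero : ∀ i j : Fin 4,
    ¬((i, j) = ((0 : Fin 4), (0 : Fin 4)) ∨ (i, j) = ((0 : Fin 4), (1 : Fin 4)) ∨
      (i, j) = ((2 : Fin 4), (1 : Fin 4))) → e i * e j = 0

/-- The weights `1, 2, 3, 5` of the basis of the example: `e i` is the only nonzero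
word of length `vinbergWeight i` in `e 0`. -/
def vinbergWeight : Fin 4 → ℕ := ![1, 2, 3, 5]

namespace HasVinbergTable

lemma isWord {B : Type*} [Mul B] [Zero B] {e : Fin 4 → B} (h : HasVinbergTable e) (i : Fin 4) :
    IsWord (amul B) {e 0} (vinbergWeight i) (e i) := by
  have word₀ : IsWord (amul B) {e 0} 1 (e 0) := .base rfl
  have word₁ : IsWord (amul B) {e 0} 2 (e 1) := h.zero_mul_zero ▸ word₀.mul word₀
  have word₂ : IsWord (amul B) {e 0} 3 (e 2) := h.zero_mul_one ▸ word₀.mul word₁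
  have word₃ : IsWord (amul B) {e 0} 5 (e 3) := h.two_mul_one ▸ word₂.mul word₁
  fin_cases i
  exacts [word₀, word₁, word₂, word₃]

protected lemma mul_mem_weightFiltration (R : Type*) {B : Type*} [Semiring R]
    [NonUnitalNonAssocSemiring B] [Module R B] {e : Fin 4 → B} (h : HasVinbergTable e)
    (i j : Fin 4) :
    e i * e j ∈ weightFiltration R e vinbergWeight (vinbergWeight i + vinbergWeight j) := by
  by_cases hij : (i, j) = ((0 : Fin 4), (0 : Fin 4)) ∨ (i, j) = ((0 : Fin 4), (1 : Fin 4)) ∨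
      (i, j) = ((2 : Fin 4), (1 : Fin 4))
  · simp only [Prod.mk.injEq] at hij
    rcases hij with ⟨rfl, rfl⟩ | ⟨rfl, rfl⟩ | ⟨rfl, rfl⟩
    · exact h.zero_mul_zero ▸ mem_weightFiltration e vinbergWeight (i := 1) le_rfl
    · exact h.zero_mul_one ▸ mem_weightFiltration e vinbergWeight (i := 2) le_rfl
    · exact h.two_mul_one ▸ mem_weightFiltration e vinbergWeight (i := 3) le_rfl
  · exact h.mul_eq_zero i j hij ▸ zero_mem _

variable {R B : Type*} [CommSemiring R] [NonUnitalNonAssocSemiring B] [Module R B]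
  [SMulCommClass R B B] [IsScalarTower R B B] {e : Basis (Fin 4) R B}

lemma mul_eq (h : HasVinbergTable e) (x y : B) :
    x * y = (e.repr x 0 * e.repr y 0) • e 1 + (e.repr x 0 * e.repr y 1) • e 2 +
      (e.repr x 2 * e.repr y 1) • e 3 := by
  conv_lhs => rw [← e.sum_repr x, ← e.sum_repr y]
  simp (discharger := decide) only [Fin.sum_univ_four, add_mul, mul_add, smul_mul_assoc,
    mul_smul_comm, h.zero_mul_zero, h.zero_mul_one, h.two_mul_one, h.mul_eq_zero, smul_zero,
    add_zero]
  module

lemma repr_mul (h : HasVinbergTable e) (x y : B) :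
    ⇑(e.repr (x * y)) =
      ![0, e.repr x 0 * e.repr y 0, e.repr x 0 * e.repr y 1, e.repr x 2 * e.repr y 1] := by
  ext i
  rw [h.mul_eq]
  fin_cases i <;> simp

lemma left_bracketed_mul_eq (h : HasVinbergTable e) (x y z : B) :
    x * y * z = (e.repr x 0 * e.repr y 1 * e.repr z 1) • e 3 := by
  rw [h.mul_eq (x * y) z, h.repr_mul]
  simp

lemma right_bracketed_mul_eq (h : HasVinbergTable e) (x y z : B) :
    x * (y * z) = (e.repr y 0 * e.repr z 0) • (e.repr x 0 • e 2 + e.repr x 2 • e 3) := by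
  rw [h.mul_eq x (y * z), h.repr_mul]
  simp only [Matrix.cons_val_zero, Matrix.cons_val_one]
  module

protected lemma mul_right_comm (h : HasVinbergTable e) (x y z : B) : x * y * z = x * z * y := by
  rw [h.left_bracketed_mul_eq, h.left_bracketed_mul_eq, mul_right_comm]

lemma mul_mul_swap (h : HasVinbergTable e) (x y z : B) : x * (y * z) = x * (z * y) := by
  rw [h.right_bracketed_mul_eq, h.right_bracketed_mul_eq, mul_comm (e.repr y 0)]

end HasVinbergTable

/-- the 4-dimensional algebra `R` with basis `e_1, e_2, e_3, e_4`
(here `e 0, …, e 3`) and multiplication `e_1e_1 = e_2`, `e_1e_2 = e_3`, `e_3e_2 = e_4`,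
other products of basis vectors being zero, is a Vinberg (right-symmetric) algebra,
`{e_1}` generates it with `l({e_1}) = 5`, and `dim R = 4` (so `l(R) ≥ 5 > 4 = dim R`). -/
theorem vinberg_example_length_gt_dim
    {F B : Type*} [Field F] [NonUnitalNonAssocRing B] [Module F B]
    [SMulCommClass F B B] [IsScalarTower F B B]
    (e : Basis (Fin 4) F B)
    (h11 : e 0 * e 0 = e 1) (h12 : e 0 * e 1 = e 2) (h32 : e 2 * e 1 = e 3)
    (hzero : ∀ i j : Fin 4,
      ¬((i, j) = ((0 : Fin 4), (0 : Fin 4)) ∨ (i, j) = ((0 : Fin 4), (1 : Fin 4)) ∨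
        (i, j) = ((2 : Fin 4), (1 : Fin 4))) → e i * e j = 0) :
    (∀ x y z : B, (x * y) * z - x * (y * z) = (x * z) * y - x * (z * y)) ∧
    Generates F (amul B) {e 0} ∧
    lenSet F (amul B) {e 0} = 5 ∧
    finrank F B = 4 := by
  have h : HasVinbergTable e := ⟨h11, h12, h32, hzero⟩
  have hS : {e 0} ⊆ (weightFiltration F e vinbergWeight 1 : Set B) :=
    Set.singleton_subset_iff.2 (mem_weightFiltration e vinbergWeight le_rfl)
  have hmul := h.mul_mem_weightFiltration F
  have hsup : Finset.univ.sup vinbergWeight = 5 := rfl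
  refine ⟨fun x y z => ?_, ?_, ?_, ?_⟩
  · rw [h.mul_right_comm, h.mul_mul_swap]
  · exact generates_of_Lset_eq_top ((Lset_eq_top_iff_of_weights hS hmul h.isWord).2
      fun _ => Finset.le_sup (Finset.mem_univ _))
  · rw [lenSet_eq_sup_weights hS hmul h.isWord, hsup]
  · rw [finrank_eq_card_basis e, Fintype.card_fin]
end
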